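/- Let n ≥ 2 be an integer and let N, p be integers with 0 ≤ p ≤ N−1. Then for every sequence u : ℕ → ℂ, a^N_{2p+1}(u) = a^{p+1}_{2p+1}(u). -/

import Mathlib

open Finset

/-- Generalized binomial coefficient `binom(x, k) = x(x-1)⋯(x-k+1)/k!` for real `x`. -/
noncomputable def rbinom (x : ℝ) (k : ℕ) : ℝ :=
  (∏ i ∈ Finset.range k, (x - i)) / (Nat.factorial k : ℝ)

/-- The constant `c_n = Γ((n−1)/2)/(2 π^{n/2} Γ(1/2))`. -/
noncomputable def cConst (n : ℕ) : ℝ :=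
  Real.Gamma (((n : ℝ) - 1) / 2) / (2 * Real.pi ^ ((n : ℝ) / 2) * Real.Gamma (1 / 2))

/-- The constant `γ_{2j+1} = i^{−(2j+1)} π^{n/2} Γ(j+1/2)/Γ(n/2+j+1/2)`. -/
noncomputable def gammaConst (n j : ℕ) : ℂ :=
  Complex.I ^ (-(2 * (j : ℤ) + 1)) * ((Real.pi ^ ((n : ℝ) / 2) : ℝ) : ℂ)
    * ((Real.Gamma ((j : ℝ) + 1 / 2) : ℝ) : ℂ)
    / ((Real.Gamma ((n : ℝ) / 2 + j + 1 / 2) : ℝ) : ℂ)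

/-- The coefficient `c_{N;L,j,k}`. -/
noncomputable def cCoef (n N L j k : ℕ) : ℂ :=
  Complex.I * (-1 : ℂ) ^ k * ((cConst n : ℝ) : ℂ) * gammaConst n j
    * (2 : ℂ) ^ k * (((N - j).factorial : ℝ) : ℂ) * ((n : ℂ) - 1)
    * ((rbinom ((L : ℝ) - 1 + (n : ℝ) / 2) (N - j) : ℝ) : ℂ)
    * ((rbinom ((n : ℝ) / 2 + j + L - N - 1) k : ℝ) : ℂ)
    * ((rbinom ((N : ℝ) + (n : ℝ) / 2 - 1 / 2) N : ℝ) : ℂ)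
    / ((((2 * N - L).factorial : ℝ) : ℂ)
        * (((L : ℝ) - N + (n : ℝ) / 2 - 1 / 2 : ℝ) : ℂ)
        * (((L - N - j - 1 - k).factorial : ℝ) : ℂ)
        * ((rbinom ((N : ℝ) - 1 / 2) N : ℝ) : ℂ))

/-- The coefficient `a^N_{2p+1}(u)`. -/
noncomputable def aCoef (n N p : ℕ) (u : ℕ → ℂ) : ℂ :=
  ∑ j ∈ Finset.range N, u j *
    ∑ s ∈ Finset.Icc (j + 1) N, ∑ k ∈ Finset.Icc (s - p - 1) (s - j - 1),
      cCoef n N (N + s) j k * (-1 : ℂ) ^ (p + 1 + k - s)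
        / ((((p + 1 + k - s).factorial : ℝ) : ℂ)
            * ((Real.Gamma ((n : ℝ) / 2 + s + p + 1) : ℝ) : ℂ)
            * (((2 : ℝ) ^ (2 * (p : ℝ) + 1 + (n : ℝ) / 2 + k) : ℝ) : ℂ))

/-!
The coefficient `a^N_{2p+1}(u)` has a closed form in which `N` does not occur:
`(-1)^p / ((2p+1) 2^{2p+n/2}) · ∑_{j ≤ p} u_j / ((p-j)! Γ(n/2+p+j+1))`.

Write `(x)_m` for the rising factorial. The `Γ`-constants and binomial coefficients that depend
neither on `s` nor on `k` combine to `(-1)^j (n/2+j+1/2)_{N-j} / (j+1/2)_{N-j}`. The sum over `k` is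
a Chu–Vandermonde convolution. With `a = n/2+2j+1` and `b = n/2+j+1/2`, the remaining sum over `s`
is `P(-b) / (b)_{N-j}`, where `P(x) = (x+a)_{N-j} / (x+a+p-j)` is a polynomial, written out by
Lagrange interpolation at the nodes `0, …, N-j-1`. Its value
`(j+1/2)_{N-j} / ((p+1/2) (n/2+j+1/2)_{N-j})` cancels the constant and with it every trace of `N`.
-/

section Pochhammer

theorem prod_erase_range_natCast_sub {R : Type*} [CommRing R] {m M : ℕ} (hm : m ≤ M) :
    ∏ i ∈ (range (M + 1)).erase m, ((m : R) - i)
      = (-1) ^ (M - m) * m.factorial * (M - m).factorial := by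
  induction M, hm using Nat.le_induction with
  | base =>
    rw [range_add_one, erase_insert (by simp), ← descPochhammer_eval_eq_prod_range,
      descPochhammer_eval_eq_descFactorial, Nat.descFactorial_self]
    simp
  | succ M hM ih =>
    rw [range_add_one, erase_insert_of_ne (by omega), prod_insert (by simp), ih,
      show M + 1 - m = (M - m) + 1 by omega, Nat.factorial_succ]
    push_cast [Nat.cast_sub hM]
    ring

theorem ascPochhammer_eval_mul_eval_add {R : Type*} [CommSemiring R] (m n : ℕ) (x : R) :
    (ascPochhammer R m).eval x * (ascPochhammer R n).eval (x + m)
      = (ascPochhammer R (m + n)).eval x := by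
  rw [← ascPochhammer_mul, Polynomial.eval_mul, Polynomial.eval_comp]
  simp

theorem nodalWeight_range_natCast {K : Type*} [Field K] {m M : ℕ} (hm : m ≤ M) :
    Lagrange.nodalWeight (range (M + 1)) (fun i : ℕ => (i : K)) m
      = (-1) ^ (M - m) / (m.factorial * (M - m).factorial) := by
  have hsign : ((-1 : K) ^ (M - m))⁻¹ = (-1) ^ (M - m) := by rw [← inv_pow, inv_neg_one]
  rw [Lagrange.nodalWeight, prod_inv_distrib, prod_erase_range_natCast_sub hm, mul_assoc, mul_inv,
    hsign, div_eq_mul_inv]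

theorem eval_neg_nodal_range_natCast {R : Type*} [CommRing R] (M : ℕ) (b : R) :
    (Lagrange.nodal (range M) (fun i : ℕ => (i : R))).eval (-b)
      = (-1) ^ M * (ascPochhammer R M).eval b := by
  rw [Lagrange.eval_nodal, ← descPochhammer_eval_eq_prod_range, ← neg_neg b,
    ascPochhammer_eval_neg_eq_descPochhammer, neg_neg, ← mul_assoc, ← mul_pow]
  simp

variable {K : Type*} [Field K] [CharZero K]

-- Lagrange interpolation of `P` at the nodes `0, …, M`, evaluated at `-b`.
theorem sum_neg_one_pow_mul_eval_div {M : ℕ} {P : Polynomial K} (hP : P.natDegree ≤ M) {b : K}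
    (hb : ∀ m ≤ M, (m : K) + b ≠ 0) :
    ∑ m ∈ range (M + 1), (-1) ^ m * P.eval (m : K) / (m.factorial * (M - m).factorial * (m + b))
      = P.eval (-b) / (ascPochhammer K (M + 1)).eval b := by
  have hinj : Set.InjOn (fun i : ℕ => (i : K)) (range (M + 1)) := Nat.cast_injective.injOn
  have hdeg : P.degree < #(range (M + 1)) := by
    rw [card_range]
    exact (Polynomial.degree_le_of_natDegree_le hP).trans_lt (by exact_mod_cast M.lt_succ_self)
  have hnode : ∀ i ∈ range (M + 1), -b ≠ (i : K) := fun i hi h =>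
    hb i (mem_range_succ_iff.mp hi) (by rw [← h, neg_add_cancel])
  have hpoch : (ascPochhammer K (M + 1)).eval b ≠ 0 := by
    rw [Ne, ascPochhammer_eval_eq_zero_iff]
    rintro ⟨m, hm, hmb⟩
    exact hb m (Nat.lt_succ_iff.mp hm) (by rw [hmb, neg_add_cancel])
  have hinterp : P.eval (-b) = _ := (congrArg (Polynomial.eval (-b))
    (Lagrange.eq_interpolate hinj hdeg)).trans (Lagrange.eval_interpolate_not_at_node _ hnode)
  rw [eq_div_iff hpoch, hinterp, eval_neg_nodal_range_natCast, mul_right_comm, mul_sum]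
  congr 1
  refine sum_congr rfl fun m hm => ?_
  obtain ⟨d, rfl⟩ := Nat.exists_eq_add_of_le (mem_range_succ_iff.mp hm)
  have hsign : (-1 : K) ^ m = -((-1) ^ (m + d + 1) * (-1) ^ d) := by
    rw [← pow_add, show m + d + 1 + d = 2 * d + (m + 1) by ring, pow_add, pow_mul, neg_one_sq,
      one_pow, one_mul, pow_succ, mul_neg_one, neg_neg]
  rw [nodalWeight_range_natCast (Nat.le_add_right m d), Nat.add_sub_cancel_left,
    ← neg_add', add_comm b, inv_neg, hsign]
  simp only [div_eq_mul_inv, mul_inv]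
  ring

theorem sum_neg_one_pow_mul_ascPochhammer_div {M q : ℕ} (hq : q ≤ M) {a b : K}
    (ha : ∀ m ≤ M, (m : K) + a + q ≠ 0) (hb : ∀ m ≤ M, (m : K) + b ≠ 0) (hab : a - b + q ≠ 0) :
    ∑ m ∈ range (M + 1), (-1) ^ m * (ascPochhammer K (M + 1)).eval (m + a)
        / (m.factorial * (M - m).factorial * (m + b) * (m + a + q))
      = (ascPochhammer K (M + 1)).eval (a - b)
        / ((a - b + q) * (ascPochhammer K (M + 1)).eval b) := by
  obtain ⟨Q, hQ⟩ : Polynomial.X - Polynomial.C (-(q : K)) ∣ ascPochhammer K (M + 1) :=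
    Polynomial.dvd_iff_isRoot.mpr (ascPochhammer_eval_neg_coe_nat_of_lt (Nat.lt_succ_of_le hq))
  have heval (x : K) : (ascPochhammer K (M + 1)).eval x = (x + q) * Q.eval x := by
    rw [hQ]
    simp
  have hdeg : (Q.comp (Polynomial.X + Polynomial.C a)).natDegree ≤ M := by
    have hQ0 : Q ≠ 0 := right_ne_zero_of_mul (hQ ▸ (monic_ascPochhammer K (M + 1)).ne_zero)
    have hQdeg := congrArg Polynomial.natDegree hQ
    rw [ascPochhammer_natDegree, Polynomial.natDegree_mul (Polynomial.X_sub_C_ne_zero _) hQ0,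
      Polynomial.natDegree_X_sub_C] at hQdeg
    rw [Polynomial.natDegree_comp, Polynomial.natDegree_X_add_C]
    omega
  have hsum := sum_neg_one_pow_mul_eval_div hdeg hb
  simp only [Polynomial.eval_comp, Polynomial.eval_add, Polynomial.eval_X, Polynomial.eval_C]
    at hsum
  rw [heval (a - b), mul_div_mul_left _ _ hab, sub_eq_neg_add, ← hsum]
  refine sum_congr rfl fun m hm => ?_
  rw [heval, mul_left_comm, mul_comm _ ((m : K) + a + q),
    mul_div_mul_left _ _ (ha m (mem_range_succ_iff.mp hm))]

end Pochhammer

section RealBinomial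

theorem factorial_mul_rbinom (x : ℝ) (k : ℕ) :
    k.factorial * rbinom x k = (ascPochhammer ℝ k).eval (x - k + 1) := by
  rw [rbinom, mul_div_cancel₀ _ (by positivity), ← descPochhammer_eval_eq_prod_range,
    descPochhammer_eval_eq_ascPochhammer]

theorem rbinom_eq_ringChoose (x : ℝ) (k : ℕ) : rbinom x k = Ring.choose x k := by
  rw [rbinom, ← descPochhammer_eval_eq_prod_range, Ring.choose_eq_smul,
    ← descPochhammer_map (algebraMap ℤ ℝ), Polynomial.eval_map, ← Polynomial.aeval_def,
    Polynomial.aeval_eq_smeval, smul_eq_mul, div_eq_inv_mul]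

theorem sum_rbinom_div_factorial (x : ℝ) (r q : ℕ) :
    ∑ k ∈ Icc (r - q) r, rbinom x k / ((r - k).factorial * (q + k - r).factorial)
      = rbinom (x + q) r / q.factorial := by
  have hsub : Icc (r - q) r ⊆ range r.succ := fun k hk => by
    simp only [mem_Icc, mem_range] at *
    omega
  rw [rbinom_eq_ringChoose, Ring.add_choose_eq r (Commute.all x (q : ℝ)),
    Nat.sum_antidiagonal_eq_sum_range_succ_mk, sum_div, ← sum_subset hsub]
  · refine sum_congr rfl fun k hk => ?_
    rw [mem_Icc] at hk
    rw [rbinom_eq_ringChoose, Ring.choose_natCast, Nat.cast_choose ℝ (show r - k ≤ q by omega),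
      show q + k - r = q - (r - k) by omega]
    field_simp
  · intro k hk hk'
    simp only [mem_Icc, mem_range] at hk hk'
    rw [Ring.choose_natCast, Nat.choose_eq_zero_of_lt (by omega)]
    simp

theorem Gamma_add_natCast {y : ℝ} (hy : ∀ m : ℕ, y ≠ -m) (k : ℕ) :
    Real.Gamma (y + k) = (ascPochhammer ℝ k).eval y * Real.Gamma y := by
  have hGamma := Complex.Gamma_add_nat_div_Gamma_eq (n := k) (y : ℂ) (by exact_mod_cast hy)
  rw [← ascPochhammer_map Complex.ofRealHom, ← Complex.ofRealHom_eq_coe,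
    Polynomial.eval_map_apply, Complex.ofRealHom_eq_coe, Complex.ofRealHom_eq_coe,
    ← Complex.ofReal_natCast, ← Complex.ofReal_add, Complex.Gamma_ofReal, Complex.Gamma_ofReal]
    at hGamma
  rw [← div_eq_iff (Real.Gamma_ne_zero hy)]
  exact_mod_cast hGamma

theorem ascPochhammer_div_mul_rbinom_div {x y : ℝ} {N j : ℕ} (hj : j ≤ N)
    (hx : (ascPochhammer ℝ j).eval x ≠ 0) (hy : (ascPochhammer ℝ j).eval y ≠ 0) :
    (ascPochhammer ℝ j).eval x / (ascPochhammer ℝ j).eval y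
        * (rbinom (y + N - 1) N / rbinom (x + N - 1) N)
      = (ascPochhammer ℝ (N - j)).eval (y + j) / (ascPochhammer ℝ (N - j)).eval (x + j) := by
  have hsplit (z : ℝ) : N.factorial * rbinom (z + N - 1) N
      = (ascPochhammer ℝ j).eval z * (ascPochhammer ℝ (N - j)).eval (z + j) := by
    rw [factorial_mul_rbinom, ascPochhammer_eval_mul_eval_add, Nat.add_sub_cancel' hj]
    ring_nf
  have hfactorial : (N.factorial : ℝ) ≠ 0 := by positivity
  rw [← mul_div_mul_left (rbinom (y + N - 1) N) _ hfactorial, hsplit, hsplit]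
  field_simp

theorem ne_neg_natCast_of_pos {y : ℝ} (hy : 0 < y) (m : ℕ) : y ≠ -m :=
  ((neg_nonpos.mpr m.cast_nonneg).trans_lt hy).ne'

theorem rbinom_eq_Gamma_div {x : ℝ} {k : ℕ} (hk : (k : ℝ) < x + 1) :
    rbinom x k = Real.Gamma (x + 1) / (k.factorial * Real.Gamma (x - k + 1)) := by
  have hpos : 0 < x - k + 1 := by linarith
  have hGamma := Gamma_add_natCast (ne_neg_natCast_of_pos hpos) k
  rw [← factorial_mul_rbinom, show x - k + 1 + k = x + 1 by ring] at hGamma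
  have := (Real.Gamma_pos_of_pos hpos).ne'
  rw [hGamma]
  field_simp

theorem sum_rbinom_div_factorial_div_Gamma {x : ℝ} {r q : ℕ} (hx : (r : ℝ) < x + q + 1) :
    ∑ k ∈ Icc (r - q) r, rbinom x k / ((r - k).factorial * (q + k - r).factorial)
        / Real.Gamma (x + q + 2)
      = 1 / (r.factorial * (x + q + 1) * (q.factorial * Real.Gamma (x + q - r + 1))) := by
  have hpos : 0 < x + q + 1 := r.cast_nonneg.trans_lt hx
  have := (Real.Gamma_pos_of_pos hpos).ne'
  rw [← sum_div, sum_rbinom_div_factorial, rbinom_eq_Gamma_div hx,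
    show x + q + 2 = (x + q + 1) + 1 by ring, Real.Gamma_add_one hpos.ne']
  field_simp

end RealBinomial

theorem I_mul_I_zpow_neg_two_mul_add_one (j : ℕ) :
    Complex.I * Complex.I ^ (-(2 * (j : ℤ) + 1)) = (-1) ^ j := by
  rw [neg_add, ← sub_eq_add_neg, zpow_sub_one₀ Complex.I_ne_zero, mul_left_comm,
    mul_inv_cancel₀ Complex.I_ne_zero, mul_one, zpow_neg, zpow_mul, zpow_natCast, zpow_ofNat,
    Complex.I_sq, ← inv_pow, inv_neg_one]

theorem I_mul_cConst_mul_gammaConst {n : ℕ} (hn : 2 ≤ n) (j : ℕ) :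
    Complex.I * cConst n * gammaConst n j * ((n : ℂ) - 1)
      = (((-1) ^ j * ((ascPochhammer ℝ j).eval (1 / 2)
          / (ascPochhammer ℝ j).eval ((n : ℝ) / 2 + 1 / 2)) : ℝ) : ℂ) := by
  have hn' : (0 : ℝ) < ((n : ℝ) - 1) / 2 := by
    have : (2 : ℝ) ≤ n := by exact_mod_cast hn
    linarith
  have hΓn : Real.Gamma ((n : ℝ) / 2 + 1 / 2)
      = ((n : ℝ) - 1) / 2 * Real.Gamma (((n : ℝ) - 1) / 2) := by
    rw [← Real.Gamma_add_one hn'.ne']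
    ring_nf
  have hΓj : Real.Gamma ((j : ℝ) + 1 / 2)
      = (ascPochhammer ℝ j).eval (1 / 2) * Real.Gamma (1 / 2) := by
    rw [add_comm, Gamma_add_natCast (ne_neg_natCast_of_pos one_half_pos)]
  have hΓnj : Real.Gamma ((n : ℝ) / 2 + j + 1 / 2)
      = (ascPochhammer ℝ j).eval ((n : ℝ) / 2 + 1 / 2) * Real.Gamma ((n : ℝ) / 2 + 1 / 2) := by
    rw [add_right_comm, Gamma_add_natCast (ne_neg_natCast_of_pos (by positivity))]
  have hreal : cConst n * (Real.pi ^ ((n : ℝ) / 2) * Real.Gamma ((j : ℝ) + 1 / 2)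
        / Real.Gamma ((n : ℝ) / 2 + j + 1 / 2)) * ((n : ℝ) - 1)
      = (ascPochhammer ℝ j).eval (1 / 2) / (ascPochhammer ℝ j).eval ((n : ℝ) / 2 + 1 / 2) := by
    have := (Real.Gamma_pos_of_pos hn').ne'
    have : (n : ℝ) - 1 ≠ 0 := by linarith
    have := (Real.Gamma_pos_of_pos one_half_pos).ne'
    have : (ascPochhammer ℝ j).eval ((n : ℝ) / 2 + 1 / 2) ≠ 0 :=
      (ascPochhammer_pos _ _ (by positivity)).ne'
    rw [hΓj, hΓnj, hΓn, cConst]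
    field_simp
  rw [← hreal, gammaConst]
  push_cast
  rw [← I_mul_I_zpow_neg_two_mul_add_one]
  ring

theorem cCoef_add_right {n : ℕ} (hn : 2 ≤ n) {N j : ℕ} (hj : j ≤ N) (s k : ℕ) :
    cCoef n N (N + s) j k
      = (((-1) ^ j * ((ascPochhammer ℝ (N - j)).eval ((n : ℝ) / 2 + j + 1 / 2)
            / (ascPochhammer ℝ (N - j)).eval ((j : ℝ) + 1 / 2))
          * (-2) ^ k * (ascPochhammer ℝ (N - j)).eval ((n : ℝ) / 2 + s + j)
          * rbinom ((n : ℝ) / 2 + j + s - 1) k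
          / ((N - s).factorial * (s + (n : ℝ) / 2 - 1 / 2)
            * (s - j - 1 - k).factorial) : ℝ) : ℂ) := by
  have hfactorial : (N - j).factorial * rbinom (((N + s : ℕ) : ℝ) - 1 + (n : ℝ) / 2) (N - j)
      = (ascPochhammer ℝ (N - j)).eval ((n : ℝ) / 2 + s + j) := by
    rw [factorial_mul_rbinom, Nat.cast_sub hj]
    push_cast
    ring_nf
  have hratio := ascPochhammer_div_mul_rbinom_div (x := 1 / 2) (y := (n : ℝ) / 2 + 1 / 2) hj
    (ascPochhammer_pos _ _ (by positivity)).ne' (ascPochhammer_pos _ _ (by positivity)).ne'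
  rw [show (n : ℝ) / 2 + j + 1 / 2 = n / 2 + 1 / 2 + j by ring, add_comm (j : ℝ), ← hratio,
    ← hfactorial, neg_pow (2 : ℝ), cCoef]
  have hI := I_mul_cConst_mul_gammaConst hn j
  rw [show 2 * N - (N + s) = N - s by omega, Nat.add_sub_cancel_left,
    show ((N + s : ℕ) : ℝ) - N + (n : ℝ) / 2 - 1 / 2 = s + (n : ℝ) / 2 - 1 / 2 by push_cast; ring,
    show (n : ℝ) / 2 + j + (N + s : ℕ) - N - 1 = (n : ℝ) / 2 + j + s - 1 by push_cast; ring,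
    show (N : ℝ) + (n : ℝ) / 2 - 1 / 2 = (n : ℝ) / 2 + 1 / 2 + N - 1 by ring,
    show (N : ℝ) - 1 / 2 = 1 / 2 + N - 1 by ring]
  simp only [Complex.ofReal_mul, Complex.ofReal_div, Complex.ofReal_pow, Complex.ofReal_neg,
    Complex.ofReal_one, Complex.ofReal_ofNat] at hI ⊢
  rw [← mul_assoc ((-1 : ℂ) ^ j), ← hI]
  simp only [div_eq_mul_inv, mul_inv]
  ring

/-- The summand of the triple sum defining `a^N_{2p+1}(u)`, without the factor `u_j`. The truncated
exponent `p + 1 + k - s` is the paper's `p + 1 - s + k` wherever `s - p - 1 ≤ k`. -/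
noncomputable def aTerm (n N p j s k : ℕ) : ℂ :=
  cCoef n N (N + s) j k * (-1 : ℂ) ^ (p + 1 + k - s)
    / ((((p + 1 + k - s).factorial : ℝ) : ℂ)
      * ((Real.Gamma ((n : ℝ) / 2 + s + p + 1) : ℝ) : ℂ)
      * (((2 : ℝ) ^ (2 * (p : ℝ) + 1 + (n : ℝ) / 2 + k) : ℝ) : ℂ))

/-- The factor of the summand `aTerm n N p j s k` that does not depend on `k`, with the `π`- and
`Γ`-constants of `c_{N;N+s,j,k}` cancelled; it leaves an inner sum over `k` that Chu–Vandermonde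
evaluates. -/
noncomputable def aTermConst (n N p j s : ℕ) : ℝ :=
  (-1) ^ (j + (p + 1 + s)) * ((ascPochhammer ℝ (N - j)).eval ((n : ℝ) / 2 + j + 1 / 2)
      / (ascPochhammer ℝ (N - j)).eval ((j : ℝ) + 1 / 2))
    * (ascPochhammer ℝ (N - j)).eval ((n : ℝ) / 2 + s + j)
    / ((N - s).factorial * (s + (n : ℝ) / 2 - 1 / 2) * 2 ^ (2 * (p : ℝ) + 1 + (n : ℝ) / 2))

theorem aTerm_eq {n : ℕ} (hn : 2 ≤ n) {N p j s k : ℕ} (hj : j ≤ N) (hs : s ≤ p + 1 + k) :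
    aTerm n N p j s k = ((aTermConst n N p j s
      * (rbinom ((n : ℝ) / 2 + j + s - 1) k
        / ((s - j - 1 - k).factorial * (p + 1 + k - s).factorial)
          / Real.Gamma ((n : ℝ) / 2 + s + p + 1)) : ℝ) : ℂ) := by
  have hpow : (2 : ℝ) ^ (2 * (p : ℝ) + 1 + (n : ℝ) / 2 + k)
      = 2 ^ (2 * (p : ℝ) + 1 + (n : ℝ) / 2) * 2 ^ k := by
    rw [Real.rpow_add two_pos, Real.rpow_natCast]
  have hsign : (-2 : ℝ) ^ k * (-1) ^ (p + 1 + k - s) / 2 ^ k = (-1) ^ (p + 1 + s) := by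
    rw [neg_pow, mul_right_comm, mul_div_cancel_right₀ _ (by positivity), ← pow_add]
    exact neg_one_pow_congr (by grind)
  rw [aTerm, cCoef_add_right hn hj, aTermConst, pow_add _ j, ← hsign, hpow]
  push_cast
  simp only [div_eq_mul_inv, mul_inv]
  ring

theorem sum_aTerm {n : ℕ} (hn : 2 ≤ n) {N p j s : ℕ} (hjp : j ≤ p) (hpN : p < N) (hjs : j < s) :
    ∑ k ∈ Icc (s - p - 1) (s - j - 1), aTerm n N p j s k
      = ((aTermConst n N p j s / ((s - j - 1).factorial * ((n : ℝ) / 2 + s + p))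
        / ((p - j).factorial * Real.Gamma ((n : ℝ) / 2 + p + j + 1)) : ℝ) : ℂ) := by
  obtain ⟨q, rfl⟩ := Nat.exists_eq_add_of_le hjp
  obtain ⟨m, rfl⟩ := Nat.exists_eq_add_of_lt hjs
  have hpos : 0 < (n : ℝ) / 2 + 2 * j + q + 1 := by positivity
  have hsum := sum_rbinom_div_factorial_div_Gamma (x := (n : ℝ) / 2 + 2 * j + m) (r := m) (q := q)
    (by linarith)
  rw [show j + m + 1 - (j + q) - 1 = m - q by omega, show j + m + 1 - j - 1 = m by omega,
    Nat.add_sub_cancel_left,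
    show (n : ℝ) / 2 + (j + q : ℕ) + j + 1 = n / 2 + 2 * j + m + q - m + 1 by push_cast; ring,
    show (n : ℝ) / 2 + (j + m + 1 : ℕ) + (j + q : ℕ) = n / 2 + 2 * j + m + q + 1 by push_cast; ring,
    div_div, div_eq_mul_one_div, ← hsum, mul_sum, Complex.ofReal_sum]
  refine sum_congr rfl fun k hk => ?_
  rw [mem_Icc] at hk
  rw [aTerm_eq hn (by omega) (by omega), show j + m + 1 - j - 1 - k = m - k by omega,
    show j + q + 1 + k - (j + m + 1) = q + k - m by omega,
    show (n : ℝ) / 2 + j + (j + m + 1 : ℕ) - 1 = n / 2 + 2 * j + m by push_cast; ring,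
    show (n : ℝ) / 2 + (j + m + 1 : ℕ) + (j + q : ℕ) + 1 = n / 2 + 2 * j + m + q + 2 by
      push_cast; ring]

theorem aTermConst_div (n j q M m : ℕ) :
    aTermConst n (j + M + 1) (j + q) j (j + 1 + m)
        / (m.factorial * ((n : ℝ) / 2 + (j + 1 + m : ℕ) + (j + q : ℕ)))
      = (-1) ^ (j + q) * ((ascPochhammer ℝ (M + 1)).eval ((n : ℝ) / 2 + j + 1 / 2)
            / (ascPochhammer ℝ (M + 1)).eval ((j : ℝ) + 1 / 2))
          / 2 ^ (2 * ((j + q : ℕ) : ℝ) + 1 + (n : ℝ) / 2)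
        * ((-1) ^ m * (ascPochhammer ℝ (M + 1)).eval (m + ((n : ℝ) / 2 + 2 * j + 1))
          / (m.factorial * (M - m).factorial * (m + ((n : ℝ) / 2 + j + 1 / 2))
            * (m + ((n : ℝ) / 2 + 2 * j + 1) + q))) := by
  have hsign : (-1 : ℝ) ^ (j + (j + q + 1 + (j + 1 + m))) = (-1) ^ (j + q) * (-1) ^ m := by
    rw [← pow_add]
    exact neg_one_pow_congr (by grind)
  rw [aTermConst, hsign, show j + M + 1 - j = M + 1 by omega,
    show j + M + 1 - (j + 1 + m) = M - m by omega,
    show (n : ℝ) / 2 + (j + 1 + m : ℕ) + j = m + (n / 2 + 2 * j + 1) by push_cast; ring,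
    show (n : ℝ) / 2 + (j + 1 + m : ℕ) + (j + q : ℕ) = m + (n / 2 + 2 * j + 1) + q by
      push_cast; ring,
    show ((j + 1 + m : ℕ) : ℝ) + n / 2 - 1 / 2 = m + (n / 2 + j + 1 / 2) by push_cast; ring]
  simp only [div_eq_mul_inv, mul_inv]
  ring

theorem sum_aTermConst_div {n N p j : ℕ} (hjp : j ≤ p) (hpN : p < N) :
    ∑ s ∈ Icc (j + 1) N, aTermConst n N p j s / ((s - j - 1).factorial * ((n : ℝ) / 2 + s + p))
      = (-1) ^ p / ((2 * p + 1) * 2 ^ (2 * (p : ℝ) + (n : ℝ) / 2)) := by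
  obtain ⟨q, rfl⟩ := Nat.exists_eq_add_of_le hjp
  obtain ⟨M, rfl⟩ := Nat.exists_eq_add_of_lt (hjp.trans_lt hpN)
  have hlagrange := sum_neg_one_pow_mul_ascPochhammer_div (M := M) (q := q) (by omega)
    (a := (n : ℝ) / 2 + 2 * j + 1) (b := (n : ℝ) / 2 + j + 1 / 2)
    (fun m _ => by positivity) (fun m _ => by positivity) (by ring_nf; positivity)
  have hterm (m : ℕ) := aTermConst_div n j q M m
  have hpow : (2 : ℝ) ^ (2 * ((j + q : ℕ) : ℝ) + 1 + (n : ℝ) / 2)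
      = 2 * 2 ^ (2 * ((j + q : ℕ) : ℝ) + (n : ℝ) / 2) := by
    rw [add_right_comm, Real.rpow_add_one two_ne_zero, mul_comm]
  have hcancel : (ascPochhammer ℝ (M + 1)).eval ((n : ℝ) / 2 + j + 1 / 2)
        / (ascPochhammer ℝ (M + 1)).eval ((j : ℝ) + 1 / 2)
      * ((ascPochhammer ℝ (M + 1)).eval ((j : ℝ) + 1 / 2) / (((j : ℝ) + 1 / 2 + q)
        * (ascPochhammer ℝ (M + 1)).eval ((n : ℝ) / 2 + j + 1 / 2)))
      = ((j : ℝ) + 1 / 2 + q)⁻¹ := by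
    have hne {x : ℝ} (hx : 0 < x) : (ascPochhammer ℝ (M + 1)).eval x ≠ 0 :=
      (ascPochhammer_pos _ _ hx).ne'
    rw [div_mul_div_cancel₀ (hne (by positivity)), div_mul_cancel_right₀ (hne (by positivity))]
  rw [← Ico_add_one_right_eq_Icc, sum_Ico_eq_sum_range,
    show j + M + 1 + 1 - (j + 1) = M + 1 by omega]
  simp only [show ∀ m, j + 1 + m - j - 1 = m by omega, hterm]
  rw [← mul_sum, hlagrange, hpow,
    show (n : ℝ) / 2 + 2 * j + 1 - (n / 2 + j + 1 / 2) = j + 1 / 2 by ring, div_mul_eq_mul_div,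
    mul_assoc, hcancel]
  push_cast
  field_simp
  ring

theorem sum_sum_aTerm {n : ℕ} (hn : 2 ≤ n) {N p j : ℕ} (hjp : j ≤ p) (hpN : p < N) :
    ∑ s ∈ Icc (j + 1) N, ∑ k ∈ Icc (s - p - 1) (s - j - 1), aTerm n N p j s k
      = (((-1) ^ p / ((2 * p + 1) * 2 ^ (2 * (p : ℝ) + (n : ℝ) / 2))
          / ((p - j).factorial * Real.Gamma ((n : ℝ) / 2 + p + j + 1)) : ℝ) : ℂ) := by
  rw [← sum_aTermConst_div hjp hpN, sum_div, Complex.ofReal_sum]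
  exact sum_congr rfl fun s hs => sum_aTerm hn hjp hpN (mem_Icc.mp hs).1

theorem aCoef_eq {n : ℕ} (hn : 2 ≤ n) {N p : ℕ} (hp : p + 1 ≤ N) (u : ℕ → ℂ) :
    aCoef n N p u = (((-1) ^ p / ((2 * p + 1) * 2 ^ (2 * (p : ℝ) + (n : ℝ) / 2)) : ℝ) : ℂ)
      * ∑ j ∈ range (p + 1),
        u j / (((p - j).factorial * Real.Gamma ((n : ℝ) / 2 + p + j + 1) : ℝ) : ℂ) := by
  change ∑ j ∈ range N, u j * ∑ s ∈ Icc (j + 1) N, ∑ k ∈ Icc (s - p - 1) (s - j - 1),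
    aTerm n N p j s k = _
  rw [← sum_subset (range_subset_range.mpr hp), mul_sum]
  · refine sum_congr rfl fun j hj => ?_
    rw [sum_sum_aTerm hn (mem_range_succ_iff.mp hj) hp]
    push_cast
    ring
  · intro j _ hj
    rw [mem_range] at hj
    refine mul_eq_zero_of_right _ (sum_eq_zero fun s hs => ?_)
    rw [mem_Icc] at hs
    rw [Icc_eq_empty (by omega), sum_empty]

theorem stmt9 (n N p : ℕ) (hn : 2 ≤ n) (hN : 1 ≤ N) (hp : p + 1 ≤ N) (u : ℕ → ℂ) :
    aCoef n N p u = aCoef n (p + 1) p u := by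
  rw [aCoef_eq hn hp, aCoef_eq hn le_rfl]
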